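/- arXiv:1710.02659 — 2 statements merged into one kernel-verified Lean document; each statement's English description precedes it below -/
import Mathlib

section
/- (Result 1, Perfect Interference Ball Model, abstract form.) Let (X_n)_{n∈ℕ} be a sequence of real-valued measurable functions on a probability space that is antitone in n pointwise (X_{n+1}(ω) ≤ X_n(ω) for all ω) and converges pointwise to a measurable function Y. Let β be a real number with 0 < P[Y < β] < 1. Then for every ξ ∈ [0,1], the similarity index S_{β,ξ}(X_n‖Y) converges to 1 as n → ∞. (In the paper: as the interference-ball radius r_IBM → ∞, the SINR of the interference ball model decreases to the SINR of the physical model, and the accuracy index of the interference ball model tends to 1.) -/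
open MeasureTheory ProbabilityTheory Filter

/-- False-alarm probability `p_fa = P[X < β | Y ≥ β]`. -/
noncomputable def pfa {Ω : Type*} [MeasurableSpace Ω] (P : Measure Ω)
    (X Y : Ω → ℝ) (β : ℝ) : ℝ :=
  (P[|{ω | β ≤ Y ω}] {ω | X ω < β}).toReal

/-- Miss-detection probability `p_md = P[X ≥ β | Y < β]`. -/
noncomputable def pmd {Ω : Type*} [MeasurableSpace Ω] (P : Measure Ω)
    (X Y : Ω → ℝ) (β : ℝ) : ℝ :=
  (P[|{ω | Y ω < β}] {ω | β ≤ X ω}).toReal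

/-- Interference model similarity index `S_{β,ξ}(X‖Y) = 1 − ξ·p_fa − (1−ξ)·p_md`. -/
noncomputable def simIndex {Ω : Type*} [MeasurableSpace Ω] (P : Measure Ω)
    (X Y : Ω → ℝ) (β ξ : ℝ) : ℝ :=
  1 - ξ * pfa P X Y β - (1 - ξ) * pmd P X Y β

/-!
A miss at `n` is the event `Y < β ≤ X n`. On it, either `X n` is at least `δ` away from `Y`, or `Y`
lies in `[β - δ, β)`. The first event is rare for large `n` because `X n` tends to `Y` in measure,
the second is rare for small `δ` by continuity from above. False alarms force `X n < Y`, which the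
monotone convergence rules out. Conditioning on an event of positive probability only rescales
these probabilities by a fixed finite factor.
-/

open scoped Topology

lemma preimage_sdiff_preimage_subset_union_cthickening {α E : Type*} [PseudoEMetricSpace E]
    (f g : α → E) (F : Set E) (δ : ℝ) :
    f ⁻¹' F \ g ⁻¹' F ⊆
      {x | ENNReal.ofReal δ ≤ edist (f x) (g x)} ∪ g ⁻¹' (Metric.cthickening δ F \ F) := by
  rintro x ⟨hfx, hgx⟩
  refine (le_total (ENNReal.ofReal δ) (edist (f x) (g x))).imp id fun hclose => ⟨?_, hgx⟩
  exact Metric.mem_cthickening_of_edist_le _ _ _ _ hfx (edist_comm (f x) (g x) ▸ hclose)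

section Measure

variable {α ι : Type*} [MeasurableSpace α] {μ : Measure α} {l : Filter ι}

lemma tendsto_cond_zero_of_tendsto_measure_inter {s : Set α} {t : ι → Set α}
    (hs : NullMeasurableSet s μ) (hs₀ : μ s ≠ 0)
    (h : Tendsto (fun i => μ (s ∩ t i)) l (𝓝 0)) :
    Tendsto (fun i => μ[|s] (t i)) l (𝓝 0) := by
  have hcond (i : ι) : μ[|s] (t i) = (μ s)⁻¹ * μ (s ∩ t i) := by
    rw [ProbabilityTheory.cond, Measure.smul_apply, Measure.restrict_apply₀' hs, Set.inter_comm,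
      smul_eq_mul]
  simpa only [hcond, mul_zero] using
    ENNReal.Tendsto.const_mul h (Or.inr (ENNReal.inv_ne_top.mpr hs₀))

variable {E : Type*} [PseudoEMetricSpace E] [MeasurableSpace E] [OpensMeasurableSpace E]

lemma tendsto_measure_cthickening_sdiff_of_isClosed (ν : Measure E) [IsFiniteMeasure ν]
    {F : Set E} (hF : IsClosed F) :
    Tendsto (fun δ : ℝ => ν (Metric.cthickening δ F \ F)) (𝓝 0) (𝓝 0) := by
  have hlim := tendsto_measure_cthickening_of_isClosed (μ := ν.restrict Fᶜ)
    ⟨1, one_pos, measure_ne_top _ _⟩ hF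
  simpa only [Measure.restrict_apply' hF.measurableSet.compl, ← Set.sdiff_eq, Set.sdiff_self,
    measure_empty] using hlim

lemma tendsto_measure_preimage_sdiff_of_tendstoInMeasure [IsFiniteMeasure μ] {f : ι → α → E}
    {g : α → E} (hg : AEMeasurable g μ) (hfg : TendstoInMeasure μ f l g) {F : Set E}
    (hF : IsClosed F) :
    Tendsto (fun i => μ (f i ⁻¹' F \ g ⁻¹' F)) l (𝓝 0) := by
  refine ENNReal.tendsto_nhds_zero.mpr fun ε hε => ?_
  have hε₂ : 0 < ε / 2 := ENNReal.half_pos hε.ne'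
  obtain ⟨δ, hδ_near, hδ⟩ : ∃ δ : ℝ, μ.map g (Metric.cthickening δ F \ F) ≤ ε / 2 ∧ 0 < δ :=
    ((((tendsto_measure_cthickening_sdiff_of_isClosed (μ.map g) hF).mono_left
      nhdsWithin_le_nhds).eventually (Iic_mem_nhds hε₂)).and
        (self_mem_nhdsWithin (s := Set.Ioi (0 : ℝ)))).exists
  filter_upwards [ENNReal.tendsto_nhds_zero.mp (hfg _ (ENNReal.ofReal_pos.mpr hδ)) _ hε₂]
    with i hδ_far
  calc
    μ (f i ⁻¹' F \ g ⁻¹' F)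
      ≤ μ {x | ENNReal.ofReal δ ≤ edist (f i x) (g x)} + μ (g ⁻¹' (Metric.cthickening δ F \ F)) :=
      (measure_mono (preimage_sdiff_preimage_subset_union_cthickening _ _ _ _)).trans
        (measure_union_le _ _)
    _ ≤ ε / 2 + ε / 2 := add_le_add hδ_far ((Measure.le_map_apply hg _).trans hδ_near)
    _ = ε := ENNReal.add_halves ε

end Measure

section SimIndex

variable {Ω ι : Type*} [MeasurableSpace Ω] {P : Measure Ω} {l : Filter ι}
  {X : ι → Ω → ℝ} {Y : Ω → ℝ} {β : ℝ}

lemma tendsto_pfa_zero (hY : AEMeasurable Y P) (hβ : P {ω | β ≤ Y ω} ≠ 0)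
    (hlt : Tendsto (fun i => P {ω | X i ω < Y ω}) l (𝓝 0)) :
    Tendsto (fun i => pfa P (X i) Y β) l (𝓝 0) := by
  have hfa : Tendsto (fun i => P ({ω | β ≤ Y ω} ∩ {ω | X i ω < β})) l (𝓝 0) :=
    tendsto_of_tendsto_of_tendsto_of_le_of_le tendsto_const_nhds hlt (fun _ => zero_le)
      fun _ => measure_mono fun _ ⟨hYβ, hXβ⟩ => lt_of_lt_of_le (Set.mem_ofPred.mp hXβ) hYβ
  exact (ENNReal.tendsto_toReal ENNReal.zero_ne_top).comp
    (tendsto_cond_zero_of_tendsto_measure_inter (nullMeasurableSet_le aemeasurable_const hY) hβ hfa)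

lemma tendsto_pmd_zero [IsFiniteMeasure P] (hY : AEMeasurable Y P) (hβ : P {ω | Y ω < β} ≠ 0)
    (hXY : TendstoInMeasure P X l Y) :
    Tendsto (fun i => pmd P (X i) Y β) l (𝓝 0) := by
  have hmd : Tendsto (fun i => P ({ω | Y ω < β} ∩ {ω | β ≤ X i ω})) l (𝓝 0) := by
    have hmiss (i : ι) :
        X i ⁻¹' Set.Ici β \ Y ⁻¹' Set.Ici β = {ω | Y ω < β} ∩ {ω | β ≤ X i ω} := by
      ext ω
      simp only [Set.mem_sdiff, Set.mem_preimage, Set.mem_Ici, not_le, Set.mem_inter_iff,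
        Set.mem_ofPred_eq, and_comm]
    simpa only [hmiss] using
      tendsto_measure_preimage_sdiff_of_tendstoInMeasure hY hXY (isClosed_Ici (a := β))
  exact (ENNReal.tendsto_toReal ENNReal.zero_ne_top).comp
    (tendsto_cond_zero_of_tendsto_measure_inter (nullMeasurableSet_lt hY aemeasurable_const) hβ hmd)

theorem simIndex_tendsto_one_of_antitone_tendsto_general [IsFiniteMeasure P]
    (hY : AEMeasurable Y P) (hlt : Tendsto (fun i => P {ω | X i ω < Y ω}) l (𝓝 0))
    (hXY : TendstoInMeasure P X l Y) (h0 : P {ω | Y ω < β} ≠ 0) (h1 : P {ω | β ≤ Y ω} ≠ 0)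
    (ξ : ℝ) : Tendsto (fun i => simIndex P (X i) Y β ξ) l (𝓝 1) := by
  simpa only [simIndex, mul_zero, sub_zero] using
    (((tendsto_pfa_zero hY h1 hlt).const_mul ξ).const_sub 1).sub
      ((tendsto_pmd_zero hY h0 hXY).const_mul (1 - ξ))

end SimIndex

/-- Result 1 (Perfect Interference Ball Model, abstract form): if `X n` decreases
pointwise to `Y`, then for every `ξ ∈ [0,1]` the similarity index `S_{β,ξ}(X n‖Y) → 1`. -/
theorem simIndex_tendsto_one_of_antitone_tendsto
    {Ω : Type*} [MeasurableSpace Ω] (P : Measure Ω) [IsProbabilityMeasure P]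
    (X : ℕ → Ω → ℝ) (Y : Ω → ℝ)
    (hX : ∀ n, Measurable (X n)) (hY : Measurable Y)
    (hanti : ∀ ω, Antitone fun n => X n ω)
    (hconv : ∀ ω, Tendsto (fun n => X n ω) atTop (nhds (Y ω)))
    (β : ℝ) (h0 : 0 < P {ω | Y ω < β}) (h1 : P {ω | Y ω < β} < 1) :
    ∀ ξ ∈ Set.Icc (0 : ℝ) 1,
      Tendsto (fun n => simIndex P (X n) Y β ξ) atTop (nhds 1) := by
  intro ξ _
  have hle (n : ℕ) (ω : Ω) : Y ω ≤ X n ω := (hanti ω).le_of_tendsto (hconv ω) n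
  have hlt (n : ℕ) : P {ω | X n ω < Y ω} = 0 := by
    simp only [(hle n _).not_gt, Set.ofPred_false, measure_empty]
  have hge : P {ω | β ≤ Y ω} ≠ 0 := by
    simpa only [Set.compl_ofPred, not_lt] using
      (prob_compl_eq_zero_iff (measurableSet_lt hY measurable_const)).not.mpr h1.ne
  have hXY : TendstoInMeasure P X atTop Y :=
    tendstoInMeasure_of_tendsto_ae (fun n => (hX n).aestronglyMeasurable) (ae_of_all _ hconv)
  exact simIndex_tendsto_one_of_antitone_tendsto_general hY.aemeasurable
    (by simp only [hlt, tendsto_const_nhds]) hXY h0.ne' hge ξ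
end

section
/- (Proposition 2, bounds on the accuracy of the protocol model.) Let X and Y be real-valued random variables on a probability space (Ω, ℱ, P) and β a real number such that almost surely X < β implies Y < β (this holds for the protocol model with interference range r_PRM ≤ ζ^{−1/α} relative to the physical model, by Result 7), and 0 < P[Y < β] < 1. Set ξ = P[Y ≥ β]. Then max(P[X < β], P[Y ≥ β]) ≤ S_{β,ξ}(X‖Y) ≤ 1. -/
open MeasureTheory ProbabilityTheory

/-!
Weighting the two error probabilities by `P[Y ≥ β]` and `P[Y < β]` cancels the conditioning, so by
the law of total probability the index at `ξ = P[Y ≥ β]` is the probability that the two models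
agree on whether there is an outage. If outage under `X` almost surely implies outage under `Y`,
the models agree both when `X < β` and when `Y ≥ β`; this gives the lower bound.
-/

section

variable {Ω : Type*} [MeasurableSpace Ω]

theorem measureReal_mono_ae {μ : Measure Ω} {s t : Set Ω} (h : s ≤ᵐ[μ] t)
    (ht : μ t ≠ ⊤ := by finiteness) : μ.real s ≤ μ.real t :=
  ENNReal.toReal_mono ht (measure_mono_ae h)

theorem measureReal_mul_cond_eq_inter {μ : Measure Ω} {s : Set Ω} (hs : MeasurableSet s)
    (t : Set Ω) (hμs : μ s ≠ ⊤ := by finiteness) :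
    μ.real s * (μ[|s]).real t = μ.real (s ∩ t) := by
  simp only [measureReal_def, ← ENNReal.toReal_mul, mul_comm (μ s), cond_mul_eq_inter' hs hμs]

theorem measureReal_mul_pfa (P : Measure Ω) [IsFiniteMeasure P] (X : Ω → ℝ) {Y : Ω → ℝ}
    (hY : Measurable Y) (β : ℝ) :
    P.real {ω | β ≤ Y ω} * pfa P X Y β = P.real ({ω | X ω < β} \ {ω | Y ω < β}) := by
  have hset : {ω | β ≤ Y ω} ∩ {ω | X ω < β} = {ω | X ω < β} \ {ω | Y ω < β} := by
    ext ω
    simp [and_comm]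
  rw [← hset]
  exact measureReal_mul_cond_eq_inter (measurableSet_le measurable_const hY) _

theorem measureReal_mul_pmd (P : Measure Ω) [IsFiniteMeasure P] (X : Ω → ℝ) {Y : Ω → ℝ}
    (hY : Measurable Y) (β : ℝ) :
    P.real {ω | Y ω < β} * pmd P X Y β = P.real ({ω | Y ω < β} \ {ω | X ω < β}) := by
  have hset : {ω | Y ω < β} ∩ {ω | β ≤ X ω} = {ω | Y ω < β} \ {ω | X ω < β} := by
    ext ω
    simp
  rw [← hset]
  exact measureReal_mul_cond_eq_inter (measurableSet_lt hY measurable_const) _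

theorem simIndex_measureReal_le_eq_measureReal_lt_iff_lt (P : Measure Ω) [IsProbabilityMeasure P]
    {X Y : Ω → ℝ} (hX : Measurable X) (hY : Measurable Y) (β : ℝ) :
    simIndex P X Y β (P.real {ω | β ≤ Y ω}) = P.real {ω | X ω < β ↔ Y ω < β} := by
  have hX_meas : MeasurableSet {ω | X ω < β} := measurableSet_lt hX measurable_const
  have hY_meas : MeasurableSet {ω | Y ω < β} := measurableSet_lt hY measurable_const
  have hξ : 1 - P.real {ω | β ≤ Y ω} = P.real {ω | Y ω < β} := by
    rw [← probReal_compl_eq_one_sub (measurableSet_le measurable_const hY)]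
    simp only [Set.compl_ofPred, not_le]
  have hagree : {ω | X ω < β ↔ Y ω < β} = (symmDiff {ω | X ω < β} {ω | Y ω < β})ᶜ := by
    ext ω
    simp only [Set.mem_compl_iff, Set.mem_symmDiff, Set.mem_ofPred_eq]
    tauto
  calc simIndex P X Y β (P.real {ω | β ≤ Y ω})
      = 1 - P.real ({ω | X ω < β} \ {ω | Y ω < β})
          - P.real ({ω | Y ω < β} \ {ω | X ω < β}) := by
        rw [simIndex, hξ, measureReal_mul_pfa P X hY, measureReal_mul_pmd P X hY]
    _ = 1 - P.real (symmDiff {ω | X ω < β} {ω | Y ω < β}) := by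
        rw [measureReal_symmDiff_eq hX_meas hY_meas, sub_sub]
    _ = P.real {ω | X ω < β ↔ Y ω < β} := by
        rw [hagree, probReal_compl_eq_one_sub (hX_meas.symmDiff hY_meas)]

end

/-- Proposition 2 (bounds on the accuracy of the protocol model): if almost surely
`X < β → Y < β` and `0 < P[Y < β] < 1`, then with `ξ = P[Y ≥ β]`,
`max(P[X < β], P[Y ≥ β]) ≤ S_{β,ξ}(X‖Y) ≤ 1`. -/
theorem simIndex_bounds_of_ae_outage_subset
    {Ω : Type*} [MeasurableSpace Ω] (P : Measure Ω) [IsProbabilityMeasure P]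
    (X Y : Ω → ℝ) (hX : Measurable X) (hY : Measurable Y) (β : ℝ)
    (hsub : ∀ᵐ ω ∂P, X ω < β → Y ω < β)
    (h0 : 0 < P {ω | Y ω < β}) (h1 : P {ω | Y ω < β} < 1)
    (ξ : ℝ) (hξ : ξ = (P {ω | β ≤ Y ω}).toReal) :
    max (P {ω | X ω < β}).toReal (P {ω | β ≤ Y ω}).toReal ≤ simIndex P X Y β ξ ∧
    simIndex P X Y β ξ ≤ 1 := by
  have hagree : simIndex P X Y β ξ = P.real {ω | X ω < β ↔ Y ω < β} :=
    hξ ▸ simIndex_measureReal_le_eq_measureReal_lt_iff_lt P hX hY β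
  have hX_le : P.real {ω | X ω < β} ≤ P.real {ω | X ω < β ↔ Y ω < β} := by
    refine measureReal_mono_ae ?_
    filter_upwards [hsub] with ω hω hXω
    exact iff_of_true hXω (hω hXω)
  have hY_le : P.real {ω | β ≤ Y ω} ≤ P.real {ω | X ω < β ↔ Y ω < β} := by
    refine measureReal_mono_ae ?_
    filter_upwards [hsub] with ω hω hYω
    exact iff_of_false (fun hXω ↦ (hω hXω).not_ge hYω) hYω.not_gt
  rw [hagree]
  exact ⟨max_le hX_le hY_le, measureReal_le_one⟩
end
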